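/- For every n ≥ 1, the number of conjugacy classes of torsion-free genus-zero subgroups of PSL(2,ℤ) of index n equals the number of equivalence classes, up to simultaneous conjugation, of pairs (σ, α) of permutations of an n-element set such that σ³ = id, α² = id, σ and α have no fixed points, the subgroup generated by σ and α acts transitively, and (number of cycles of σ) + (number of cycles of α) + (number of cycles of σ·α) = n + 2. -/

import Mathlib

open Matrix

/-- `SL(2,ℤ)`: the group of 2×2 integer matrices of determinant 1. -/
abbrev SL2Z := Matrix.SpecialLinearGroup (Fin 2) ℤ

instance : Fact (Even (Fintype.card (Fin 2))) := ⟨by simp⟩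

/-- The subgroup `{±I}` of `SL(2,ℤ)`. -/
def pmOne : Subgroup SL2Z := Subgroup.zpowers (-1 : SL2Z)

instance : pmOne.Normal := by
  constructor
  intro x hx g
  obtain ⟨n, rfl⟩ := hx
  have h : Commute ((-1 : SL2Z) ^ n) g := (Commute.neg_one_left g).zpow_left n
  refine ⟨n, ?_⟩
  rw [← h.eq, mul_assoc, mul_inv_cancel, mul_one]

/-- `PSL(2,ℤ)`, the modular group, as the quotient of `SL(2,ℤ)` by `{±I}`. -/
abbrev PSL2Z := SL2Z ⧸ pmOne

/-- The natural projection `ξ : SL(2,ℤ) → PSL(2,ℤ)`. -/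
def xi : SL2Z →* PSL2Z := QuotientGroup.mk' pmOne

/-- The element `S` of `PSL(2,ℤ)`, the image of `[[0,-1],[1,0]]`. -/
def Sp : PSL2Z := xi ⟨!![0, -1; 1, 0], by norm_num [Matrix.det_fin_two_of]⟩

/-- The element `T` of `PSL(2,ℤ)`, the image of `[[1,1],[0,1]]`. -/
def Tp : PSL2Z := xi ⟨!![1, 1; 0, 1], by norm_num [Matrix.det_fin_two_of]⟩

/-- The number of left cosets in `PSL(2,ℤ)/Γ` fixed by `g` (for the
left-multiplication action).  For `g = S` this is `e₂(Γ)`, for `g = S*T` it is `e₃(Γ)`. -/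
noncomputable def nFix (g : PSL2Z) (Γ : Subgroup PSL2Z) : ℕ :=
  Nat.card {x : PSL2Z ⧸ Γ // g • x = x}

/-- The number of orbits of the cyclic subgroup generated by `g` on `PSL(2,ℤ)/Γ`.
For `g = S, S*T, T` these are `c₂(Γ), c₃(Γ), h(Γ)` respectively. -/
noncomputable def nOrb (g : PSL2Z) (Γ : Subgroup PSL2Z) : ℕ :=
  Nat.card (MulAction.orbitRel.Quotient (Subgroup.zpowers g) (PSL2Z ⧸ Γ))

/-- `Γ` has genus zero: `c₂(Γ) + c₃(Γ) + h(Γ) = index(Γ) + 2`. -/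
def GenusZero (Γ : Subgroup PSL2Z) : Prop :=
  nOrb Sp Γ + nOrb (Sp * Tp) Γ + nOrb Tp Γ = Γ.index + 2

/-- `Γ` is torsion free: it contains no nontrivial element of finite order. -/
def TorsionFree (Γ : Subgroup PSL2Z) : Prop :=
  ∀ x ∈ Γ, x ≠ 1 → ¬ IsOfFinOrder x

/-- Two subgroups of a group are conjugate. -/
def SubgroupConj {G : Type*} [Group G] (H K : Subgroup G) : Prop :=
  ∃ g : G, Subgroup.map (MulAut.conj g).toMonoidHom H = K

/-- The number of conjugacy classes of subgroups of `PSL(2,ℤ)` satisfying `P`. -/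
noncomputable def countClasses (P : Subgroup PSL2Z → Prop) : ℕ :=
  Nat.card (Quot fun A B : {Γ : Subgroup PSL2Z // P Γ} => SubgroupConj A.1 B.1)

/-- The index of the torsion free subgroup `Γ^tf` associated to `Γ`:
`index(Γ) + 3·e₂(Γ) + 2·e₃(Γ)`. -/
noncomputable def tfIdx (Γ : Subgroup PSL2Z) : ℕ :=
  Γ.index + 3 * nFix Sp Γ + 2 * nFix (Sp * Tp) Γ

/-- A hypermap of size `n`: permutations `σ, α` of an `n`-element set with
`σ³ = 1`, `α² = 1`, generating a transitive subgroup. -/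
structure Hypermap (n : ℕ) where
  sigma : Equiv.Perm (Fin n)
  alpha : Equiv.Perm (Fin n)
  sigma_cube : sigma ^ 3 = 1
  alpha_sq : alpha ^ 2 = 1
  trans : ∀ x y : Fin n, ∃ g ∈ Subgroup.closure ({sigma, alpha} : Set (Equiv.Perm (Fin n))), g x = y

/-- Equivalence of hypermaps: simultaneous conjugation. -/
def HypermapEquiv {n : ℕ} (M N : Hypermap n) : Prop :=
  ∃ ψ : Equiv.Perm (Fin n),
    (∀ x, ψ (M.sigma x) = N.sigma (ψ x)) ∧
    (∀ x, ψ (M.alpha x) = N.alpha (ψ x))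

/-- The number of cycles (including fixed points) of a permutation of `Fin n`,
i.e. the number of orbits of the cyclic group it generates. -/
noncomputable def permCycles {n : ℕ} (σ : Equiv.Perm (Fin n)) : ℕ :=
  Nat.card (MulAction.orbitRel.Quotient (Subgroup.zpowers σ) (Fin n))

/-!
In a group generated by an involution `s` and a subgroup `A`, every element is conjugate to `s`, to
an element of `A`, or to a word `(s a₁) ⋯ (s aₖ)` with nontrivial letters `aᵢ ∈ A`. For `s = S` and
`A = ⟨ST⟩` in the modular group, the possible syllables `S(ST) = T` and `S(ST)⁻¹ = ST⁻¹S⁻¹` are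
represented by nonnegative matrices other than the identity. These form a semigroup, so such words
are nontrivial and of infinite order. Hence the modular group is presented by `S² = (ST)³ = 1`, and
its torsion is conjugate to a power of `S` or `ST`.

By the presentation, a pair `(σ, α)` as in the theorem is a transitive action of the modular group
in which `ST` acts as `σ` and `S` as `α`; such actions are classified by the conjugacy class of a
point stabilizer. The stabilizer is torsion-free exactly when `S` and `ST` fix no point, and the
genus conditions agree because `T = S(ST)` acts as `ασ`, a conjugate of `σα`.
-/

section ConjugacyNormalForm

variable {H G : Type*} [Group H] [Group G] {s : H} {A : Subgroup H} {l : List H}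

/-- The product `(s * a₁) * ⋯ * (s * aₖ)` attached to the list `[a₁, …, aₖ]`. -/
def alternatingProd (s : H) (l : List H) : H :=
  (l.map (s * ·)).prod

/-- The semigroup of nonempty alternating words `(s * a₁) * ⋯ * (s * aₖ)` with nontrivial letters
`aᵢ ∈ A`. -/
def alternatingWords (s : H) (A : Subgroup H) : Subsemigroup H :=
  Subsemigroup.closure ((s * ·) '' ((A : Set H) \ {1}))

/-- The conjugacy normal forms, as in a free product `⟨s⟩ * A`: the letter `s`, the elements of
`A`, and the alternating words. -/
def cyclicallyReduced (s : H) (A : Subgroup H) : Set H :=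
  insert s (A ∪ alternatingWords s A)

@[simp]
lemma alternatingProd_nil (s : H) : alternatingProd s [] = 1 := rfl

@[simp]
lemma alternatingProd_cons (s a : H) (l : List H) :
    alternatingProd s (a :: l) = s * a * alternatingProd s l := by
  simp [alternatingProd]

@[simp]
lemma alternatingProd_append (s : H) (l l' : List H) :
    alternatingProd s (l ++ l') = alternatingProd s l * alternatingProd s l' := by
  simp [alternatingProd]

lemma alternatingProd_mem_alternatingWords (hl : ∀ a ∈ l, a ∈ (A : Set H) \ {1}) (hne : l ≠ []) :
    alternatingProd s l ∈ alternatingWords s A := by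
  induction l with
  | nil => exact absurd rfl hne
  | cons a l ih =>
    rw [List.forall_mem_cons] at hl
    have ha : s * a ∈ alternatingWords s A :=
      Subsemigroup.subset_closure (Set.mem_image_of_mem _ hl.1)
    rcases eq_or_ne l [] with rfl | hl'
    · simpa using ha
    · simpa using mul_mem ha (ih hl.2 hl')

lemma mul_mem_conjugatesOfSet_comm {S : Set H} {x y : H} :
    x * y ∈ Group.conjugatesOfSet S ↔ y * x ∈ Group.conjugatesOfSet S := by
  constructor <;> intro h
  · simpa [mul_assoc] using Group.conj_mem_conjugatesOfSet (c := y) h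
  · simpa [mul_assoc] using Group.conj_mem_conjugatesOfSet (c := x) h

lemma alternatingProd_mem_conjugatesOfSet (hl : ∀ a ∈ l, a ∈ (A : Set H) \ {1}) :
    alternatingProd s l ∈ Group.conjugatesOfSet (cyclicallyReduced s A) := by
  apply Group.subset_conjugatesOfSet
  rcases eq_or_ne l [] with rfl | hne
  · exact .inr (.inl A.one_mem)
  · exact .inr (.inr (alternatingProd_mem_alternatingWords hl hne))

lemma alternatingProd_mul_involution_mul_mem_conjugatesOfSet (hl : ∀ a ∈ l, a ∈ (A : Set H) \ {1})
    (hls : alternatingProd s l * s ∈ Group.conjugatesOfSet (cyclicallyReduced s A))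
    {c : H} (hc : c ∈ A) :
    alternatingProd s l * (s * c) ∈ Group.conjugatesOfSet (cyclicallyReduced s A) := by
  rcases eq_or_ne c 1 with rfl | hc1
  · simpa using hls
  · have hlc : ∀ a ∈ l ++ [c], a ∈ (A : Set H) \ {1} :=
      List.forall_mem_append.2 ⟨hl, by simp [hc, hc1]⟩
    simpa using alternatingProd_mem_conjugatesOfSet hlc

-- Conjugating by `s` moves the first letter next to the last one, where the two merge.
lemma alternatingProd_mul_involution_mem_conjugatesOfSet (hs : s * s = 1)
    (hl : ∀ a ∈ l, a ∈ (A : Set H) \ {1}) :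
    alternatingProd s l * s ∈ Group.conjugatesOfSet (cyclicallyReduced s A) := by
  induction l using List.bidirectionalRec with
  | nil =>
    rw [alternatingProd_nil, one_mul]
    exact Group.subset_conjugatesOfSet (.inl rfl)
  | singleton a =>
    have ha : a ∈ Group.conjugatesOfSet (cyclicallyReduced s A) :=
      Group.subset_conjugatesOfSet (.inr (.inl (hl a (by simp)).1))
    rw [mul_mem_conjugatesOfSet_comm]
    simpa [← mul_assoc, hs] using ha
  | cons_append a l b ih =>
    have hl' : ∀ a ∈ l, a ∈ (A : Set H) \ {1} := fun c hc => hl c (by simp [hc])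
    have hba : b * a ∈ A := A.mul_mem (hl b (by simp)).1 (hl a (by simp)).1
    have h := alternatingProd_mul_involution_mul_mem_conjugatesOfSet hl' (ih hl') hba
    rw [← mul_assoc s, ← mul_assoc, mul_mem_conjugatesOfSet_comm] at h
    rw [mul_mem_conjugatesOfSet_comm]
    simpa [← mul_assoc, hs] using h

lemma alternatingProd_mul_mem_conjugatesOfSet (hs : s * s = 1)
    (hl : ∀ a ∈ l, a ∈ (A : Set H) \ {1}) {c : H} (hc : c ∈ A) :
    alternatingProd s l * c ∈ Group.conjugatesOfSet (cyclicallyReduced s A) := by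
  rcases List.eq_nil_or_concat l with rfl | ⟨l, b, rfl⟩
  · simpa using Group.subset_conjugatesOfSet (.inr (.inl hc))
  · rw [List.concat_eq_append, List.forall_mem_append, List.forall_mem_singleton] at hl
    simpa [mul_assoc] using alternatingProd_mul_involution_mul_mem_conjugatesOfSet hl.1
      (alternatingProd_mul_involution_mem_conjugatesOfSet hs hl.1) (A.mul_mem hl.2.1 hc)

/-- `x` is a product `a * w` or `a * w * s` with `a ∈ A` and `w` an alternating product: the shape
of the normal forms of a free product `⟨s⟩ * A`. -/
def HasAlternatingForm (s : H) (A : Subgroup H) (x : H) : Prop :=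
  ∃ a ∈ A, ∃ l : List H, (∀ b ∈ l, b ∈ (A : Set H) \ {1}) ∧
    (x = a * alternatingProd s l ∨ x = a * alternatingProd s l * s)

namespace HasAlternatingForm

variable {x : H}

lemma mul_involution (hs : s * s = 1) (hx : HasAlternatingForm s A x) :
    HasAlternatingForm s A (x * s) := by
  obtain ⟨a, ha, l, hl, rfl | rfl⟩ := hx
  · exact ⟨a, ha, l, hl, .inr rfl⟩
  · exact ⟨a, ha, l, hl, .inl (by simp [mul_assoc, hs])⟩

lemma alternatingProd_mul_involution_mul {a c : H} (ha : a ∈ A)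
    (hl : ∀ b ∈ l, b ∈ (A : Set H) \ {1}) (hc : c ∈ A) :
    HasAlternatingForm s A (a * alternatingProd s l * s * c) := by
  rcases eq_or_ne c 1 with rfl | hc1
  · exact ⟨a, ha, l, hl, .inr (mul_one _)⟩
  · exact ⟨a, ha, l ++ [c], List.forall_mem_append.2 ⟨hl, by simp [hc, hc1]⟩,
      .inl (by simp [mul_assoc])⟩

lemma mul_mem (hx : HasAlternatingForm s A x) {c : H} (hc : c ∈ A) :
    HasAlternatingForm s A (x * c) := by
  obtain ⟨a, ha, l, hl, rfl | rfl⟩ := hx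
  · rcases List.eq_nil_or_concat l with rfl | ⟨l, b, rfl⟩
    · exact ⟨a * c, A.mul_mem ha hc, [], by simp, .inl (by simp)⟩
    · rw [List.concat_eq_append, List.forall_mem_append, List.forall_mem_singleton] at hl
      simpa [mul_assoc] using alternatingProd_mul_involution_mul ha hl.1 (A.mul_mem hl.2.1 hc)
  · exact alternatingProd_mul_involution_mul ha hl hc

lemma of_closure_eq_top (hs : s * s = 1) (hgen : Subgroup.closure (insert s (A : Set H)) = ⊤)
    (x : H) : HasAlternatingForm s A x := by
  have hx : x ∈ Subgroup.closure (insert s (A : Set H)) := hgen ▸ Subgroup.mem_top x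
  induction hx using Subgroup.closure_induction_right with
  | one => exact ⟨1, A.one_mem, [], by simp, .inl (by simp)⟩
  | mul_right x _ y hy ih =>
    rcases hy with rfl | hy
    · exact ih.mul_involution hs
    · exact ih.mul_mem hy
  | mul_inv_cancel x _ y hy ih =>
    rcases hy with rfl | hy
    · rw [inv_eq_of_mul_eq_one_left hs]
      exact ih.mul_involution hs
    · exact ih.mul_mem (A.inv_mem hy)

end HasAlternatingForm

theorem mem_conjugatesOfSet_cyclicallyReduced (hs : s * s = 1)
    (hgen : Subgroup.closure (insert s (A : Set H)) = ⊤) (x : H) :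
    x ∈ Group.conjugatesOfSet (cyclicallyReduced s A) := by
  obtain ⟨a, ha, l, hl, rfl | rfl⟩ := HasAlternatingForm.of_closure_eq_top hs hgen x
  · rw [mul_mem_conjugatesOfSet_comm]
    exact alternatingProd_mul_mem_conjugatesOfSet hs hl ha
  · rw [mul_assoc, mul_mem_conjugatesOfSet_comm, mul_assoc]
    exact alternatingProd_mul_involution_mul_mem_conjugatesOfSet hl
      (alternatingProd_mul_involution_mem_conjugatesOfSet hs hl) ha

theorem injective_of_forall_mem_cyclicallyReduced (hs : s * s = 1)
    (hgen : Subgroup.closure (insert s (A : Set H)) = ⊤) (f : H →* G)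
    (hf : ∀ y ∈ cyclicallyReduced s A, f y = 1 → y = 1) : Function.Injective f := by
  rw [injective_iff_map_eq_one]
  intro x hx
  obtain ⟨y, hy, hyx⟩ :=
    Group.mem_conjugatesOfSet_iff.1 (mem_conjugatesOfSet_cyclicallyReduced hs hgen x)
  have hfy : f y = 1 := isConj_one_left.1 (hx ▸ f.map_isConj hyx)
  exact isConj_one_right.1 (hf y hy hfy ▸ hyx)

end ConjugacyNormalForm

lemma not_isOfFinOrder_of_mem_of_one_notMem {M : Type*} [Monoid M] {P : Subsemigroup M}
    (hP : (1 : M) ∉ P) {x : M} (hx : x ∈ P) : ¬IsOfFinOrder x := by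
  have hpow : ∀ n, x ^ (n + 1) ∈ P := fun n => by
    induction n with
    | zero => simpa using hx
    | succ n ih => exact pow_succ x (n + 1) ▸ mul_mem ih hx
  rw [isOfFinOrder_iff_pow_eq_one]
  rintro ⟨n, hn, h1⟩
  exact hP (h1 ▸ Nat.sub_add_cancel hn ▸ hpow (n - 1))

lemma eq_one_or_eq_or_eq_inv_of_mem_zpowers {H : Type*} [Group H] {u a : H} (hu : u ^ 3 = 1)
    (ha : a ∈ Subgroup.zpowers u) : a = 1 ∨ a = u ∨ a = u⁻¹ := by
  obtain ⟨k, rfl⟩ := ha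
  have h2 : u ^ (2 : ℤ) = u⁻¹ := eq_inv_of_mul_eq_one_left (by rw [zpow_ofNat, ← pow_succ, hu])
  have hk : k % 3 = 0 ∨ k % 3 = 1 ∨ k % 3 = 2 := by lia
  simp only [zpow_eq_zpow_emod' k hu]
  rcases hk with h | h | h <;> simp [h, h2]

lemma closure_insert_zpowers {H : Type*} [Group H] {s u : H}
    (h : Subgroup.closure {s, u} = ⊤) :
    Subgroup.closure (insert s (Subgroup.zpowers u : Set H)) = ⊤ := by
  rw [eq_top_iff, ← h]
  exact Subgroup.closure_mono (Set.insert_subset_insert (by simp))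

namespace PSL2Z

/-- The order-three generator `S * T` of the modular group. -/
def Up : PSL2Z := Sp * Tp

lemma xi_eq_one_iff {M : SL2Z} : xi M = 1 ↔ M = 1 ∨ M = -1 := by
  have hker : xi M = 1 ↔ M ∈ pmOne := QuotientGroup.eq_one_iff M
  rw [hker, pmOne, Subgroup.mem_zpowers_iff]
  constructor
  · rintro ⟨k, rfl⟩
    exact (Int.even_or_odd k).imp Even.neg_one_zpow Odd.neg_one_zpow
  · rintro (rfl | rfl)
    exacts [⟨0, zpow_zero _⟩, ⟨1, zpow_one _⟩]

lemma Up_eq_xi : Up = xi (ModularGroup.S * ModularGroup.T) := rfl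

lemma Sp_mul_Sp : Sp * Sp = 1 :=
  xi_eq_one_iff.2 (.inr (by decide) : ModularGroup.S * ModularGroup.S = 1 ∨ _)

lemma Up_pow_three : Up ^ 3 = 1 := by
  rw [Up_eq_xi, ← map_pow, xi_eq_one_iff]
  exact .inr (by decide)

lemma Sp_ne_one : Sp ≠ 1 :=
  mt xi_eq_one_iff.1 (by decide : ¬(ModularGroup.S = 1 ∨ ModularGroup.S = -1))

lemma Up_ne_one : Up ≠ 1 := by
  rw [Up_eq_xi, Ne, xi_eq_one_iff]
  decide

lemma Sp_mul_Up : Sp * Up = Tp := by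
  rw [Up, ← mul_assoc, Sp_mul_Sp, one_mul]

lemma closure_Sp_Up : Subgroup.closure {Sp, Up} = (⊤ : Subgroup PSL2Z) := by
  have hST : Subgroup.closure {Sp, Tp} = (⊤ : Subgroup PSL2Z) := by
    have h := congrArg (Subgroup.map xi) SpecialLinearGroup.SL2Z_generators
    rwa [MonoidHom.map_closure, Set.image_pair,
      Subgroup.map_top_of_surjective xi (QuotientGroup.mk'_surjective pmOne)] at h
  have hS : Sp ∈ Subgroup.closure {Sp, Up} := Subgroup.subset_closure (by simp)
  have hU : Up ∈ Subgroup.closure {Sp, Up} := Subgroup.subset_closure (by simp)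
  rw [eq_top_iff, ← hST, Subgroup.closure_le, Set.pair_subset_iff]
  exact ⟨hS, Sp_mul_Up ▸ mul_mem hS hU⟩

/-- The semigroup of nonnegative matrices of `SL(2,ℤ)` other than the identity. -/
def nonnegMatrices : Subsemigroup SL2Z where
  carrier := {M | 1 ≤ M 0 0 ∧ 1 ≤ M 1 1 ∧ 0 ≤ M 0 1 ∧ 0 ≤ M 1 0 ∧ 1 ≤ M 0 1 + M 1 0}
  mul_mem' := by
    rintro M N ⟨ha, hd, hb, hc, hbc⟩ ⟨ha', hd', hb', hc', hbc'⟩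
    have hMN : ∀ i j, (M * N) i j = M i 0 * N 0 j + M i 1 * N 1 j := fun _ _ =>
      (Matrix.mul_apply (M := M.1) (N := N.1)).trans (Fin.sum_univ_two _)
    simp only [Set.mem_ofPred_eq, hMN]
    refine ⟨?_, ?_, ?_, ?_, ?_⟩ <;>
      nlinarith [mul_nonneg hb hc', mul_nonneg hb' hc, mul_nonneg hb hb', mul_nonneg hc hc']

lemma mem_nonnegMatrices {M : SL2Z} : M ∈ nonnegMatrices ↔
    1 ≤ M 0 0 ∧ 1 ≤ M 1 1 ∧ 0 ≤ M 0 1 ∧ 0 ≤ M 1 0 ∧ 1 ≤ M 0 1 + M 1 0 :=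
  Iff.rfl

/-- The image of `nonnegMatrices` in the modular group. -/
def nonneg : Subsemigroup PSL2Z :=
  nonnegMatrices.map (xi : SL2Z →ₙ* PSL2Z)

lemma one_notMem_nonneg : (1 : PSL2Z) ∉ nonneg := by
  rintro ⟨M, hM, h1⟩
  rw [SetLike.mem_coe, mem_nonnegMatrices] at hM
  rcases xi_eq_one_iff.1 h1 with rfl | rfl <;> revert hM <;> decide

lemma Sp_mul_Up_mem_nonneg : Sp * Up ∈ nonneg :=
  Sp_mul_Up ▸ ⟨ModularGroup.T, mem_nonnegMatrices.2 (by decide), rfl⟩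

lemma Sp_mul_Up_inv_mem_nonneg : Sp * Up⁻¹ ∈ nonneg := by
  refine ⟨ModularGroup.S * (ModularGroup.S * ModularGroup.T)⁻¹,
    mem_nonnegMatrices.2 (by decide), ?_⟩
  rw [Up_eq_xi, ← map_inv]
  exact map_mul xi _ _

section UniversalProperty

variable {H : Type*} [Group H] {s u : H}

lemma map_mem_nonneg_of_mem_alternatingWords (hu : u ^ 3 = 1) {f : H →* PSL2Z} (hfs : f s = Sp)
    (hfu : f u = Up) {w : H} (hw : w ∈ alternatingWords s (Subgroup.zpowers u)) :
    f w ∈ nonneg := by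
  induction hw using Subsemigroup.closure_induction with
  | mem w hw =>
    obtain ⟨a, ⟨ha, ha1⟩, rfl⟩ := hw
    rcases (eq_one_or_eq_or_eq_inv_of_mem_zpowers hu ha).resolve_left ha1 with rfl | rfl
    · simpa [hfs, hfu] using Sp_mul_Up_mem_nonneg
    · simpa [hfs, hfu] using Sp_mul_Up_inv_mem_nonneg
  | mul x y _ _ hx hy => exact map_mul f x y ▸ mul_mem hx hy

lemma injective_of_map_generators (hs : s * s = 1) (hu : u ^ 3 = 1)
    (hgen : Subgroup.closure {s, u} = ⊤) {f : H →* PSL2Z} (hfs : f s = Sp) (hfu : f u = Up) :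
    Function.Injective f := by
  refine injective_of_forall_mem_cyclicallyReduced hs (closure_insert_zpowers hgen) f ?_
  rintro y (rfl | hy | hy) hfy
  · exact absurd (hfs ▸ hfy) Sp_ne_one
  · rcases eq_one_or_eq_or_eq_inv_of_mem_zpowers hu hy with rfl | rfl | rfl
    · rfl
    · exact absurd (hfu ▸ hfy) Up_ne_one
    · exact absurd (by simpa [hfu] using hfy) Up_ne_one
  · exact absurd (hfy ▸ map_mem_nonneg_of_mem_alternatingWords hu hfs hfu hy) one_notMem_nonneg

/-- The relators `x₁²` and `x₀³` of the presentation of the modular group as the free product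
`C₂ * C₃`; the generator `true` stands for `Sp` and `false` for `Up`. -/
def modularRels : Set (FreeGroup Bool) :=
  {FreeGroup.of true * FreeGroup.of true, FreeGroup.of false ^ 3}

lemma lift_eq_one_of_mem_modularRels (hs : s * s = 1) (hu : u ^ 3 = 1) :
    ∀ r ∈ modularRels, FreeGroup.lift (fun b => bif b then s else u) r = 1 := by
  rintro r (rfl | rfl)
  · simpa using hs
  · simpa using hu

/-- The homomorphism from the abstract group `⟨s, u | s² = u³ = 1⟩` given by two elements
satisfying its relations. -/
def ofPresentation (hs : s * s = 1) (hu : u ^ 3 = 1) : PresentedGroup modularRels →* H :=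
  PresentedGroup.toGroup (lift_eq_one_of_mem_modularRels hs hu)

@[simp]
lemma ofPresentation_true (hs : s * s = 1) (hu : u ^ 3 = 1) :
    ofPresentation hs hu (.of true) = s :=
  PresentedGroup.toGroup.of _

@[simp]
lemma ofPresentation_false (hs : s * s = 1) (hu : u ^ 3 = 1) :
    ofPresentation hs hu (.of false) = u :=
  PresentedGroup.toGroup.of _

lemma ofPresentation_Sp_Up_injective :
    Function.Injective (ofPresentation Sp_mul_Sp Up_pow_three) := by
  have hs : (.of true * .of true : PresentedGroup modularRels) = 1 :=
    PresentedGroup.one_of_mem (.inl rfl)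
  have hu : (.of false ^ 3 : PresentedGroup modularRels) = 1 :=
    PresentedGroup.one_of_mem (.inr rfl)
  refine injective_of_map_generators hs hu ?_ (ofPresentation_true _ _) (ofPresentation_false _ _)
  rw [← PresentedGroup.closure_range_of, Bool.range_eq, Set.pair_comm]

lemma ofPresentation_Sp_Up_surjective :
    Function.Surjective (ofPresentation Sp_mul_Sp Up_pow_three) := by
  rw [← MonoidHom.range_eq_top, eq_top_iff, ← closure_Sp_Up, Subgroup.closure_le,
    Set.pair_subset_iff]
  exact ⟨⟨_, ofPresentation_true _ _⟩, ⟨_, ofPresentation_false _ _⟩⟩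

/-- The presentation `⟨s, u | s² = u³ = 1⟩` of the modular group. -/
noncomputable def presentationEquiv : PresentedGroup modularRels ≃* PSL2Z :=
  MulEquiv.ofBijective (ofPresentation Sp_mul_Sp Up_pow_three)
    ⟨ofPresentation_Sp_Up_injective, ofPresentation_Sp_Up_surjective⟩

lemma presentationEquiv_symm_Sp : presentationEquiv.symm Sp = .of true :=
  presentationEquiv.symm_apply_eq.2 (ofPresentation_true Sp_mul_Sp Up_pow_three).symm

lemma presentationEquiv_symm_Up : presentationEquiv.symm Up = .of false :=
  presentationEquiv.symm_apply_eq.2 (ofPresentation_false Sp_mul_Sp Up_pow_three).symm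

/-- The universal property of the modular group: the homomorphism sending `Sp` to `s` and `Up`
to `u`. -/
noncomputable def lift (hs : s * s = 1) (hu : u ^ 3 = 1) : PSL2Z →* H :=
  (ofPresentation hs hu).comp (presentationEquiv.symm : PSL2Z →* PresentedGroup modularRels)

@[simp]
lemma lift_Sp (hs : s * s = 1) (hu : u ^ 3 = 1) : lift hs hu Sp = s := by
  simp [lift, presentationEquiv_symm_Sp]

@[simp]
lemma lift_Up (hs : s * s = 1) (hu : u ^ 3 = 1) : lift hs hu Up = u := by
  simp [lift, presentationEquiv_symm_Up]

end UniversalProperty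

lemma isConj_of_isOfFinOrder {x : PSL2Z} (hx : IsOfFinOrder x) (hx1 : x ≠ 1) :
    IsConj Sp x ∨ IsConj Up x ∨ IsConj Up⁻¹ x := by
  obtain ⟨y, hy, hyx⟩ := Group.mem_conjugatesOfSet_iff.1
    (mem_conjugatesOfSet_cyclicallyReduced Sp_mul_Sp (closure_insert_zpowers closure_Sp_Up) x)
  rcases hy with rfl | hy | hy
  · exact .inl hyx
  · rcases eq_one_or_eq_or_eq_inv_of_mem_zpowers Up_pow_three hy with rfl | rfl | rfl
    · exact absurd (isConj_one_right.1 hyx) hx1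
    · exact .inr (.inl hyx)
    · exact .inr (.inr hyx)
  · have hy0 : y ∈ nonneg :=
      map_mem_nonneg_of_mem_alternatingWords (f := .id _) Up_pow_three rfl rfl hy
    exact absurd (hyx.symm.isOfFinOrder hx)
      (not_isOfFinOrder_of_mem_of_one_notMem one_notMem_nonneg hy0)

end PSL2Z

section TransitiveAction

open MulAction
open scoped Pointwise

variable {G X Y : Type*} [Group G]

lemma subgroupConj_equivalence : Equivalence (SubgroupConj (G := G)) where
  refl H := ⟨1, show MulAut.conj (1 : G) • H = H by rw [map_one, one_smul]⟩
  symm := by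
    rintro H _ ⟨g, rfl⟩
    exact ⟨g⁻¹, show MulAut.conj g⁻¹ • MulAut.conj g • H = H by rw [map_inv, inv_smul_smul]⟩
  trans := by
    rintro H _ _ ⟨g, rfl⟩ ⟨h, rfl⟩
    exact ⟨h * g, show MulAut.conj (h * g) • H = MulAut.conj h • MulAut.conj g • H by
      rw [map_mul, mul_smul]⟩

variable [MulAction G X]

/-- The number of orbits on `X` of the cyclic group generated by `a`; both `nOrb` and `permCycles`
are instances. -/
noncomputable def cyclicOrbitCount (a : G) (X : Type*) [MulAction G X] : ℕ :=
  Nat.card (orbitRel.Quotient (Subgroup.zpowers a) X)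

lemma mem_orbit_zpowers_iff {a : G} {x y : X} :
    x ∈ orbit (Subgroup.zpowers a) y ↔ ∃ k : ℤ, a ^ k • y = x := by
  rw [mem_orbit_iff, Subgroup.exists_zpowers]
  rfl

lemma cyclicOrbitCount_congr {K : Type*} [Group K] [MulAction K Y] {a : G} {b : K} (e : X ≃ Y)
    (h : ∀ x, e (a • x) = b • e x) : cyclicOrbitCount a X = cyclicOrbitCount b Y := by
  have hab : e.permCongrHom (toPermHom G X a) = toPermHom K Y b :=
    Equiv.ext fun y => by simp [h]
  have hzpow (k : ℤ) (x : X) : e (a ^ k • x) = b ^ k • e x := by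
    have hk : e.permCongrHom (toPermHom G X (a ^ k)) = toPermHom K Y (b ^ k) := by
      simp only [map_zpow, hab]
    simpa using Equiv.congr_fun hk (e x)
  refine Nat.card_congr (Quotient.congr e fun x y => ?_)
  change x ∈ orbit (Subgroup.zpowers a) y ↔ e x ∈ orbit (Subgroup.zpowers b) (e y)
  simp only [mem_orbit_zpowers_iff, ← hzpow, e.injective.eq_iff]

variable [MulAction G Y]

lemma map_smul_of_closure_eq_top {S : Set G} (hS : Subgroup.closure S = ⊤) {f : X → Y}
    (hf : ∀ g ∈ S, ∀ x, f (g • x) = g • f x) (g : G) (x : X) : f (g • x) = g • f x := by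
  have hg : g ∈ Subgroup.closure S := hS ▸ Subgroup.mem_top g
  induction hg using Subgroup.closure_induction generalizing x with
  | mem g hg => exact hf g hg x
  | one => simp only [one_smul]
  | mul g h _ _ ihg ihh => rw [mul_smul, mul_smul, ihg, ihh]
  | inv g _ ih => rw [eq_inv_smul_iff, ← ih, smul_inv_smul]

lemma stabilizer_map_of_injective {f : X → Y} (hf : Function.Injective f)
    (hsmul : ∀ (g : G) (x : X), f (g • x) = g • f x) (x : X) :
    stabilizer G (f x) = stabilizer G x := by
  ext g
  rw [mem_stabilizer_iff, mem_stabilizer_iff, ← hsmul, hf.eq_iff]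

variable [IsPretransitive G X]

/-- The orbit-stabilizer equivalence of a transitive action. -/
noncomputable def quotientStabilizerEquiv (x : X) : G ⧸ stabilizer G x ≃ X :=
  Equiv.ofBijective (ofQuotientStabilizer G x)
    ⟨injective_ofQuotientStabilizer G x, fun y =>
      let ⟨g, hg⟩ := exists_smul_eq G x y
      ⟨g, hg⟩⟩

lemma quotientStabilizerEquiv_smul (x : X) (g : G) (z : G ⧸ stabilizer G x) :
    quotientStabilizerEquiv x (g • z) = g • quotientStabilizerEquiv x z :=
  ofQuotientStabilizer_smul G x g z

lemma exists_equiv_of_stabilizer_eq [IsPretransitive G Y] {x : X} {y : Y}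
    (h : stabilizer G x = stabilizer G y) :
    ∃ e : X ≃ Y, ∀ (g : G) (z : X), e (g • z) = g • e z := by
  refine ⟨(quotientStabilizerEquiv x).symm.trans
    ((Subgroup.quotientEquivOfEq h).trans (quotientStabilizerEquiv y)), fun g z => ?_⟩
  obtain ⟨z, rfl⟩ := (quotientStabilizerEquiv (G := G) x).surjective z
  obtain ⟨k, rfl⟩ := QuotientGroup.mk_surjective z
  rw [← quotientStabilizerEquiv_smul]
  simp only [Equiv.trans_apply, Equiv.symm_apply_apply]
  exact quotientStabilizerEquiv_smul y g k

lemma subgroupConj_stabilizer_iff [IsPretransitive G Y] {x : X} {y : Y} :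
    SubgroupConj (stabilizer G x) (stabilizer G y) ↔
      ∃ e : X ≃ Y, ∀ (g : G) (z : X), e (g • z) = g • e z := by
  constructor
  · rintro ⟨g, hg⟩
    exact exists_equiv_of_stabilizer_eq ((stabilizer_smul_eq_stabilizer_map_conj g x).trans hg)
  · rintro ⟨e, he⟩
    obtain ⟨g, hg⟩ := exists_smul_eq G x (e.symm y)
    refine ⟨g, ?_⟩
    rw [← stabilizer_smul_eq_stabilizer_map_conj, hg, ← stabilizer_map_of_injective e.injective he,
      e.apply_symm_apply]

lemma exists_smul_eq_self_iff_exists_isConj {a : G} (x : X) :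
    (∃ y : X, a • y = y) ↔ ∃ b ∈ stabilizer G x, IsConj a b := by
  constructor
  · rintro ⟨y, hy⟩
    obtain ⟨g, rfl⟩ := exists_smul_eq G x y
    refine ⟨g⁻¹ * a * g, ?_, isConj_iff.2 ⟨g⁻¹, by rw [inv_inv]⟩⟩
    rw [mem_stabilizer_iff, mul_smul, mul_smul, hy, inv_smul_smul]
  · rintro ⟨b, hb, hab⟩
    obtain ⟨g, rfl⟩ := isConj_iff.1 hab
    refine ⟨g⁻¹ • x, ?_⟩
    rw [eq_inv_smul_iff, ← mul_smul, ← mul_smul]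
    exact hb

end TransitiveAction

section TransitiveModularAction

open MulAction PSL2Z

variable {X : Type*} [MulAction PSL2Z X] [IsPretransitive PSL2Z X] (x : X)

lemma nOrb_stabilizer_eq_permCycles {n : ℕ} {a : PSL2Z} {σ : Equiv.Perm (Fin n)} (e : X ≃ Fin n)
    (h : ∀ y, e (a • y) = σ (e y)) : nOrb a (stabilizer PSL2Z x) = permCycles σ :=
  calc
    nOrb a (stabilizer PSL2Z x) = cyclicOrbitCount a X :=
      cyclicOrbitCount_congr (quotientStabilizerEquiv x) (quotientStabilizerEquiv_smul x a)
    _ = permCycles σ := cyclicOrbitCount_congr (b := σ) e h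

lemma torsionFree_stabilizer_iff :
    TorsionFree (stabilizer PSL2Z x) ↔ (∀ y : X, Up • y ≠ y) ∧ ∀ y : X, Sp • y ≠ y := by
  constructor
  · intro h
    have hfree {a : PSL2Z} (ha : IsOfFinOrder a) (ha1 : a ≠ 1) (y : X) : a • y ≠ y := fun hy => by
      obtain ⟨b, hb, hab⟩ := (exists_smul_eq_self_iff_exists_isConj x).1 ⟨y, hy⟩
      exact h b hb (fun hb1 => ha1 (isConj_one_left.1 (hb1 ▸ hab))) (hab.isOfFinOrder ha)
    exact ⟨hfree (isOfFinOrder_iff_pow_eq_one.2 ⟨3, three_pos, Up_pow_three⟩) Up_ne_one,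
      hfree (isOfFinOrder_iff_pow_eq_one.2 ⟨2, two_pos, (sq Sp).trans Sp_mul_Sp⟩) Sp_ne_one⟩
  · rintro ⟨hUp, hSp⟩ b hb hb1 hfin
    have hfix {a : PSL2Z} (hab : IsConj a b) : ∃ y : X, a • y = y :=
      (exists_smul_eq_self_iff_exists_isConj x).2 ⟨b, hb, hab⟩
    rcases isConj_of_isOfFinOrder hfin hb1 with h | h | h <;> obtain ⟨y, hy⟩ := hfix h
    · exact hSp y hy
    · exact hUp y hy
    · exact hUp y (inv_smul_eq_iff.1 hy).symm

end TransitiveModularAction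

namespace Hypermap

open MulAction PSL2Z

variable {n : ℕ} {M N : Hypermap n}

/-- The underlying set of a hypermap, as a type synonym of `Fin n` carrying the action of the
modular group in which `Up` acts as `σ` and `Sp` as `α`. -/
def Dart (_ : Hypermap n) : Type := Fin n

/-- The identification of the darts with the underlying set `Fin n`. -/
def dartEquiv (M : Hypermap n) : M.Dart ≃ Fin n := Equiv.refl _

/-- The homomorphism to the permutation group sending `Up` to `σ` and `Sp` to `α`. -/
noncomputable def monodromy (M : Hypermap n) : PSL2Z →* Equiv.Perm (Fin n) :=
  PSL2Z.lift ((sq M.alpha).symm.trans M.alpha_sq) M.sigma_cube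

lemma monodromy_Up : M.monodromy Up = M.sigma := lift_Up _ _

lemma monodromy_Sp : M.monodromy Sp = M.alpha := lift_Sp _ _

noncomputable instance (M : Hypermap n) : MulAction PSL2Z M.Dart :=
  compHom (Fin n) M.monodromy

@[simp]
lemma dartEquiv_Up_smul (x : M.Dart) : M.dartEquiv (Up • x) = M.sigma (M.dartEquiv x) :=
  Equiv.congr_fun monodromy_Up x

@[simp]
lemma dartEquiv_Sp_smul (x : M.Dart) : M.dartEquiv (Sp • x) = M.alpha (M.dartEquiv x) :=
  Equiv.congr_fun monodromy_Sp x

@[simp]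
lemma dartEquiv_symm_sigma (x : Fin n) :
    M.dartEquiv.symm (M.sigma x) = Up • M.dartEquiv.symm x := by
  rw [Equiv.symm_apply_eq, dartEquiv_Up_smul, Equiv.apply_symm_apply]

@[simp]
lemma dartEquiv_symm_alpha (x : Fin n) :
    M.dartEquiv.symm (M.alpha x) = Sp • M.dartEquiv.symm x := by
  rw [Equiv.symm_apply_eq, dartEquiv_Sp_smul, Equiv.apply_symm_apply]

instance (M : Hypermap n) : IsPretransitive PSL2Z M.Dart where
  exists_smul_eq x y := by
    obtain ⟨σ, hσ, hxy⟩ := M.trans (M.dartEquiv x) (M.dartEquiv y)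
    have hle : Subgroup.closure {M.sigma, M.alpha} ≤ M.monodromy.range := by
      rw [Subgroup.closure_le, Set.pair_subset_iff]
      exact ⟨⟨Up, monodromy_Up⟩, ⟨Sp, monodromy_Sp⟩⟩
    obtain ⟨g, rfl⟩ := hle hσ
    exact ⟨g, hxy⟩

lemma hypermapEquiv_iff :
    HypermapEquiv M N ↔ ∃ e : M.Dart ≃ N.Dart, ∀ (g : PSL2Z) (x : M.Dart), e (g • x) = g • e x := by
  constructor
  · rintro ⟨ψ, hσ, hα⟩
    refine ⟨M.dartEquiv.trans (ψ.trans N.dartEquiv.symm),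
      map_smul_of_closure_eq_top closure_Sp_Up ?_⟩
    rintro _ (rfl | rfl) x <;> apply N.dartEquiv.injective <;> simp [hσ, hα]
  · rintro ⟨e, he⟩
    exact ⟨M.dartEquiv.symm.trans (e.trans N.dartEquiv), by simp [he], by simp [he]⟩

section OfAction

variable {X : Type*} [MulAction PSL2Z X] [IsPretransitive PSL2Z X]

/-- The hypermap of a transitive action of the modular group on an `n`-element set. -/
def ofAction (e : X ≃ Fin n) : Hypermap n where
  sigma := e.permCongrHom (toPermHom PSL2Z X Up)
  alpha := e.permCongrHom (toPermHom PSL2Z X Sp)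
  sigma_cube := by rw [← map_pow, ← map_pow, Up_pow_three, map_one, map_one]
  alpha_sq := by rw [← map_pow, ← map_pow, sq, Sp_mul_Sp, map_one, map_one]
  trans x y := by
    obtain ⟨g, hg⟩ := exists_smul_eq PSL2Z (e.symm x) (e.symm y)
    let φ : PSL2Z →* Equiv.Perm (Fin n) := e.permCongrHom.toMonoidHom.comp (toPermHom PSL2Z X)
    have hφ : φ g ∈ Subgroup.closure (φ '' {Up, Sp}) := by
      rw [← MonoidHom.map_closure, Set.pair_comm, closure_Sp_Up]
      exact Subgroup.mem_map_of_mem φ (Subgroup.mem_top g)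
    rw [Set.image_pair] at hφ
    exact ⟨φ g, hφ, by simp [φ, hg]⟩

/-- The identification of an `n`-element set with the darts of its hypermap. -/
def ofActionEquiv (e : X ≃ Fin n) : X ≃ (ofAction e).Dart :=
  e.trans (ofAction e).dartEquiv.symm

lemma ofActionEquiv_smul (e : X ≃ Fin n) (g : PSL2Z) (x : X) :
    ofActionEquiv e (g • x) = g • ofActionEquiv e x := by
  revert g x
  refine map_smul_of_closure_eq_top closure_Sp_Up ?_
  have hσ (x : X) : (ofAction e).sigma (e x) = e (Up • x) := by simp [ofAction]
  have hα (x : X) : (ofAction e).alpha (e x) = e (Sp • x) := by simp [ofAction]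
  rintro _ (rfl | rfl) x <;> apply (ofAction e).dartEquiv.injective <;>
    simp [ofActionEquiv, hσ, hα]

end OfAction

lemma exists_stabilizer_eq (hn : n ≠ 0) {Γ : Subgroup PSL2Z} (hΓ : Γ.index = n) :
    ∃ (M : Hypermap n) (o : M.Dart), stabilizer PSL2Z o = Γ := by
  have : Finite (PSL2Z ⧸ Γ) := Nat.finite_of_card_ne_zero (hΓ.trans_ne hn)
  let e : PSL2Z ⧸ Γ ≃ Fin n := Finite.equivFinOfCardEq hΓ
  refine ⟨ofAction e, ofActionEquiv e (1 : PSL2Z), ?_⟩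
  rw [stabilizer_map_of_injective (ofActionEquiv e).injective (ofActionEquiv_smul e),
    stabilizer_quotient]

lemma index_stabilizer (o : M.Dart) : (stabilizer PSL2Z o).index = n := by
  rw [index_stabilizer_of_transitive, Nat.card_congr M.dartEquiv, Nat.card_fin]

lemma genusZero_stabilizer_iff (o : M.Dart) : GenusZero (stabilizer PSL2Z o) ↔
    permCycles M.sigma + permCycles M.alpha + permCycles (M.sigma * M.alpha) = n + 2 := by
  have hσ : nOrb Up (stabilizer PSL2Z o) = permCycles M.sigma :=
    nOrb_stabilizer_eq_permCycles o M.dartEquiv dartEquiv_Up_smul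
  have hα : nOrb Sp (stabilizer PSL2Z o) = permCycles M.alpha :=
    nOrb_stabilizer_eq_permCycles o M.dartEquiv dartEquiv_Sp_smul
  have hσα : nOrb Tp (stabilizer PSL2Z o) = permCycles (M.sigma * M.alpha) := by
    -- `T = S * Up` acts as `α * σ`, which `α` conjugates to `σ * α`.
    refine nOrb_stabilizer_eq_permCycles o ((toPerm Sp).trans M.dartEquiv) fun x => ?_
    change M.dartEquiv (Sp • Tp • x) = M.sigma (M.alpha (M.dartEquiv (Sp • x)))
    have hSS : Sp • Sp • x = x := by rw [smul_smul, Sp_mul_Sp, one_smul]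
    rw [← dartEquiv_Sp_smul, hSS, ← dartEquiv_Up_smul, smul_smul, Up]
  rw [GenusZero, ← Up, hσ, hα, hσα, index_stabilizer, add_comm (permCycles M.alpha)]

lemma torsionFree_stabilizer_iff (o : M.Dart) : TorsionFree (stabilizer PSL2Z o) ↔
    (∀ x, M.sigma x ≠ x) ∧ ∀ x, M.alpha x ≠ x := by
  rw [_root_.torsionFree_stabilizer_iff, ← M.dartEquiv.forall_congr_right,
    ← M.dartEquiv.forall_congr_right]
  simp only [← dartEquiv_Up_smul, ← dartEquiv_Sp_smul, ne_eq, M.dartEquiv.injective.eq_iff]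

end Hypermap

lemma card_quot_eq_of_map {A B : Type*} {r : A → A → Prop} {s : B → B → Prop}
    (hs : Equivalence s) (F : A → B) (hF : ∀ a a', r a a' ↔ s (F a) (F a'))
    (hsurj : ∀ b, ∃ a, s (F a) b) : Nat.card (Quot s) = Nat.card (Quot r) := by
  symm
  refine Nat.card_congr (Equiv.ofBijective (Quot.map F fun a a' => (hF a a').1) ⟨?_, ?_⟩)
  · rintro ⟨a⟩ ⟨a'⟩ h
    exact Quot.sound ((hF a a').2 ((hs.quot_mk_eq_iff _ _).1 h))
  · rintro ⟨b⟩
    obtain ⟨a, ha⟩ := hsurj b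
    exact ⟨Quot.mk _ a, Quot.sound ha⟩

open MulAction in
theorem countClasses_index_eq {n : ℕ} (hn : n ≠ 0) {P : Subgroup PSL2Z → Prop}
    {Q : Hypermap n → Prop} (h : ∀ M (o : M.Dart), P (stabilizer PSL2Z o) ↔ Q M) :
    countClasses (fun Γ => Γ.index = n ∧ P Γ) =
      Nat.card (Quot fun A B : {M : Hypermap n // Q M} => HypermapEquiv A.1 B.1) := by
  have : NeZero n := ⟨hn⟩
  let o (M : Hypermap n) : M.Dart := M.dartEquiv.symm 0
  have hconj {M N : Hypermap n} (x : M.Dart) (y : N.Dart) :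
      HypermapEquiv M N ↔ SubgroupConj (stabilizer PSL2Z x) (stabilizer PSL2Z y) :=
    Hypermap.hypermapEquiv_iff.trans subgroupConj_stabilizer_iff.symm
  refine card_quot_eq_of_map (subgroupConj_equivalence.comap Subtype.val)
    (fun M => ⟨stabilizer PSL2Z (o M.1), Hypermap.index_stabilizer _, (h M.1 _).2 M.2⟩)
    (fun A B => hconj (o A.1) (o B.1)) ?_
  rintro ⟨Γ, hindex, hP⟩
  obtain ⟨M, x, rfl⟩ := Hypermap.exists_stabilizer_eq hn hindex
  exact ⟨⟨M, (h M x).1 hP⟩, (hconj (o M) x).1 ⟨.refl _, fun _ => rfl, fun _ => rfl⟩⟩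

/-- The number of conjugacy classes of torsion-free genus-zero index-`n` subgroups of
`PSL(2,ℤ)` equals the number of equivalence classes of size-`n` hypermaps `(σ, α)`
with `σ, α` fixed-point free and with
`(cycles of σ) + (cycles of α) + (cycles of σα) = n + 2`. -/
theorem count_tf_genus_zero_eq_hypermaps (n : ℕ) (hn : 1 ≤ n) :
    countClasses (fun Γ => Γ.index = n ∧ GenusZero Γ ∧ TorsionFree Γ) =
    Nat.card (Quot fun A B : {M : Hypermap n //
        (∀ x, M.sigma x ≠ x) ∧ (∀ x, M.alpha x ≠ x) ∧
        permCycles M.sigma + permCycles M.alpha + permCycles (M.sigma * M.alpha) = n + 2} =>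
      HypermapEquiv A.1 B.1) := by
  refine countClasses_index_eq (Nat.one_le_iff_ne_zero.1 hn) fun M o => ?_
  rw [Hypermap.genusZero_stabilizer_iff, Hypermap.torsionFree_stabilizer_iff, and_comm, and_assoc]
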